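/- Let ℛ = ℂ[z^6, z^8+z^9] + z^{36}ℂ⟦z⟧, whose value semigroup is Γ = ⟨6,8,25⟩, and let D = {10,17,19,23,27,29,35} (a subset of the gap set of Γ). Then there exist standard modules 𝓜 with D_𝓜 = D∪{2} and standard modules 𝓜 with D_𝓜 = D∪{4}, but there is no standard module 𝓜 with D_𝓜 = D∪{2,4}. -/

import Mathlib

open PowerSeries

noncomputable section

/-- `𝒪 = ℂ⟦z⟧`, the ring of formal power series over `ℂ`. -/
abbrev 𝒪 : Type := PowerSeries ℂ

/-- `ν(f)`: the order of a power series (least `n` with nonzero coefficient);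
only meaningful for `f ≠ 0`. -/
noncomputable def ord (f : 𝒪) : ℕ := sInf {n : ℕ | PowerSeries.coeff n f ≠ 0}

/-- The value semigroup `Γ = {ν(x) : 0 ≠ x ∈ ℛ}` of a subalgebra `ℛ ⊆ 𝒪`. -/
def SGamma (R : Subalgebra ℂ 𝒪) : Set ℕ := {n | ∃ x ∈ R, x ≠ (0:𝒪) ∧ ord x = n}

/-- The set of gaps `G = ℕ ∖ Γ`. -/
def Gaps (R : Subalgebra ℂ 𝒪) : Set ℕ := (SGamma R)ᶜ

/-- `Δ` is a `Γ`-module: `Γ + Δ ⊆ Δ`. -/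
def IsGammaModule (Γ Δ : Set ℕ) : Prop := ∀ a ∈ Γ, ∀ d ∈ Δ, a + d ∈ Δ

/-- `Δ_𝓜 = {ν(x) : 0 ≠ x ∈ 𝓜}` for an `ℛ`-submodule `𝓜 ⊆ 𝒪`. -/
def DeltaM (R : Subalgebra ℂ 𝒪) (M : Submodule ↥R 𝒪) : Set ℕ :=
  {n | ∃ x ∈ M, x ≠ (0:𝒪) ∧ ord x = n}

/-- `D_𝓜 = Δ_𝓜 ∩ G`, the set of added gaps. -/
def Dset (R : Subalgebra ℂ 𝒪) (M : Submodule ↥R 𝒪) : Set ℕ := DeltaM R M ∩ Gaps R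

/-- A standard module: a finitely generated `ℛ`-submodule of `𝒪` containing an
element of order `0`. -/
def IsStd (R : Subalgebra ℂ 𝒪) (M : Submodule ↥R 𝒪) : Prop :=
  M.FG ∧ ∃ x ∈ M, x ≠ (0:𝒪) ∧ ord x = 0

/-- `c ≥ 1` is the conductor of `ℛ`: the minimal exponent with `z^c𝒪 ⊆ ℛ`. -/
def HasConductor (R : Subalgebra ℂ 𝒪) (c : ℕ) : Prop :=
  1 ≤ c ∧ (∀ f : 𝒪, (PowerSeries.X : 𝒪)^c * f ∈ R) ∧
    ∀ c' : ℕ, (∀ f : 𝒪, (PowerSeries.X : 𝒪)^c' * f ∈ R) → c ≤ c'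

/-- `z^j𝒪` as a `ℂ`-submodule of `𝒪`. -/
def zO (j : ℕ) : Submodule ℂ 𝒪 :=
  LinearMap.range (LinearMap.mulLeft ℂ ((PowerSeries.X : 𝒪)^j))

/-- `𝔪𝓜` as a `ℂ`-submodule of `𝒪`, where `𝔪 = {x ∈ ℛ : x = 0 or ν(x) > 0}`
is the maximal ideal of `ℛ`. -/
def mSmul (R : Subalgebra ℂ 𝒪) (M : Submodule ↥R 𝒪) : Submodule ℂ 𝒪 :=
  Submodule.span ℂ {z : 𝒪 | ∃ r ∈ (R : Set 𝒪), ∃ y ∈ M, (r = 0 ∨ 0 < ord r) ∧ z = r * y}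

/-- `dim_ℂ (A / B)` for `ℂ`-subspaces; intended for `B ≤ A`. -/
noncomputable def quotDim (A B : Submodule ℂ 𝒪) : ℕ :=
  Module.finrank ℂ (↥A ⧸ Submodule.comap A.subtype B)

/-- `D_i = D_0 ∪ {g_1, …, g_i}` (the gaps `g` are indexed by `1, …, m`). -/
def DFlagSet (D0 : Set ℕ) (g : ℕ → ℕ) (i : ℕ) : Set ℕ := D0 ∪ g '' Set.Icc 1 i

/-- `(D_0, …, D_m)` with `D_i = D_0 ∪ {g_1 < … < g_i}` is a `D`-flag:
all `Δ_i = Γ ∪ D_i` are `Γ`-modules. -/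
def IsDFlag (R : Subalgebra ℂ 𝒪) (m : ℕ) (D0 : Set ℕ) (g : ℕ → ℕ) : Prop :=
  D0 ⊆ Gaps R ∧ StrictMonoOn g (Set.Icc 1 m) ∧
  (∀ i, 1 ≤ i → i ≤ m → g i ∈ Gaps R \ D0) ∧
  (∀ i ≤ m, IsGammaModule (SGamma R) (SGamma R ∪ DFlagSet D0 g i))

/-- A `D`-flag is admissible if it is realized by a flag of standard modules. -/
def IsAdmissibleFlag (R : Subalgebra ℂ 𝒪) (m : ℕ) (D0 : Set ℕ) (g : ℕ → ℕ) : Prop :=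
  ∃ MM : ℕ → Submodule ↥R 𝒪, (∀ i, i < m → MM i ≤ MM (i+1)) ∧
    ∀ i ≤ m, IsStd R (MM i) ∧ Dset R (MM i) = DFlagSet D0 g i

/-- The subalgebra `ℂ[z^a, z^b + z^c] + z^N ℂ⟦z⟧` of `𝒪`. -/
def Rring (a b c N : ℕ) : Subalgebra ℂ 𝒪 where
  carrier := {f : 𝒪 | ∃ p ∈ Algebra.adjoin ℂ
      ({(PowerSeries.X : 𝒪)^a, (PowerSeries.X : 𝒪)^b + (PowerSeries.X : 𝒪)^c} : Set 𝒪),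
    ∃ g : 𝒪, f = p + (PowerSeries.X : 𝒪)^N * g}
  mul_mem' := by
    rintro x y ⟨p, hp, gx, rfl⟩ ⟨q, hq, gy, rfl⟩
    exact ⟨p * q, mul_mem hp hq,
      p * gy + gx * q + (PowerSeries.X : 𝒪)^N * (gx * gy), by ring⟩
  one_mem' := ⟨1, one_mem _, 0, by ring⟩
  add_mem' := by
    rintro x y ⟨p, hp, gx, rfl⟩ ⟨q, hq, gy, rfl⟩
    exact ⟨p + q, add_mem hp hq, gx + gy, by ring⟩
  zero_mem' := ⟨0, zero_mem _, 0, by ring⟩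
  algebraMap_mem' := fun r => ⟨algebraMap ℂ 𝒪 r, Subalgebra.algebraMap_mem _ r, 0, by ring⟩

/-- The ring `ℂ⟦z^4, z^{2u}+z^v⟧ = ℂ[z^4, z^{2u}+z^v] + z^{4u+v}ℂ⟦z⟧` for the
plane curve singularity with Puiseux exponents `(4, 2u, v)`. -/
def Rcal (u v : ℕ) : Subalgebra ℂ 𝒪 := Rring 4 (2*u) v (4*u+v)

/-- The gap counting function `γ_Δ(ℓ) = |[ℓ,∞) ∖ Δ|`. -/
noncomputable def gapCount (Δ : Set ℕ) (ℓ : ℕ) : ℕ := Set.ncard {k : ℕ | ℓ ≤ k ∧ k ∉ Δ}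

/-- `n = n(D)`: the smallest odd number in `(Δ ∪ {v}) ∩ [2u, ∞)`. -/
noncomputable def nOdd (u v : ℕ) (Δ : Set ℕ) : ℕ :=
  sInf {k : ℕ | Odd k ∧ 2*u ≤ k ∧ (k ∈ Δ ∨ k = v)}

/-- The dimension change `μ_{D,g}` of Theorem `dimprop` (for the family `(4,2u,v)`),
where `Γ` is the value semigroup. -/
noncomputable def muDim (u v : ℕ) (Γ : Set ℕ) (D : Set ℕ) (gp : ℕ) : ℕ :=
  let Δ : Set ℕ := Γ ∪ D
  let Δ' : Set ℕ := Δ ∪ {gp}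
  let n : ℕ := nOdd u v Δ
  if gp % 4 = 2 then
    (gapCount Δ' gp - gapCount Δ' (gp+4)) - (gapCount Δ' (gp+n) - gapCount Δ' (gp+4+n))
  else gapCount Δ' gp - gapCount Δ' (gp+4)

/-!
Write `x = z⁶` and `y = z⁸ + z⁹`. Non-existence: if `M` contains series
`f = 1 + a z + ⋯`, `g = z² + b z³ + ⋯` and `h = z⁴ + c z⁵ + ⋯`, then `x g - y f`, `x h - y g` and
`y h - x² f` start with `(b - a - 1) z⁹`, `(c - b - 1) z¹¹` and `(c - a + 1) z¹³`. As `9`, `11` and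
`13` are not orders of elements of `M`, all three coefficients vanish, which forces `3 = 0`.

Existence: `⟨1, z²(1 + z)⟩` and `⟨1 + z, z⁴⟩` acquire the further orders `19` and `17` through
syzygies, and adjoining `z¹⁷`, respectively `z¹⁹`, produces all of the required ones. To see that
`n` is not an order of a module, it suffices to find a series `w` with `w(0) ≠ 0` such that
`f ↦ coeff n (w f)` vanishes on the module. Since the orders form a `Γ`-module, this has to be
done only for the largest missing orders; for `ℛ` itself `n = 35` is enough, by the symmetry
`n ∈ Γ ↔ 35 - n ∉ Γ`.
-/

theorem ne_zero_and_ord_eq_iff_order_eq {f : 𝒪} {n : ℕ} : f ≠ 0 ∧ ord f = n ↔ f.order = n := by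
  constructor
  · rintro ⟨hf, rfl⟩
    have hne : {n | coeff n f ≠ 0}.Nonempty := exists_coeff_ne_zero_iff_ne_zero.mpr hf
    exact order_eq_nat.mpr ⟨Nat.sInf_mem hne, fun i hi ↦ not_not.mp (Nat.notMem_of_lt_sInf hi)⟩
  · intro h
    obtain ⟨hn, hlt⟩ := order_eq_nat.mp h
    refine ⟨fun hf ↦ hn (by rw [hf, map_zero]), le_antisymm (Nat.sInf_le hn) ?_⟩
    exact le_csInf ⟨n, hn⟩ fun m hm ↦ not_lt.mp fun hmn ↦ hm (hlt m hmn)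

section Orders

variable {R : Subalgebra ℂ 𝒪} {M : Submodule R 𝒪} {n : ℕ}

theorem mem_SGamma_iff_exists_order_eq : n ∈ SGamma R ↔ ∃ r ∈ R, r.order = n := by
  simp only [SGamma, Set.mem_ofPred_eq, ne_zero_and_ord_eq_iff_order_eq]

theorem mem_DeltaM_iff_exists_order_eq : n ∈ DeltaM R M ↔ ∃ f ∈ M, f.order = n := by
  simp only [DeltaM, Set.mem_ofPred_eq, ne_zero_and_ord_eq_iff_order_eq]

theorem isGammaModule_DeltaM (R : Subalgebra ℂ 𝒪) (M : Submodule R 𝒪) :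
    IsGammaModule (SGamma R) (DeltaM R M) := by
  intro a ha d hd
  obtain ⟨r, hr, hra⟩ := mem_SGamma_iff_exists_order_eq.mp ha
  obtain ⟨f, hf, hfd⟩ := mem_DeltaM_iff_exists_order_eq.mp hd
  refine mem_DeltaM_iff_exists_order_eq.mpr ⟨r * f, M.smul_mem ⟨r, hr⟩ hf, ?_⟩
  rw [order_mul, hra, hfd, Nat.cast_add]

theorem SGamma_eq_DeltaM_span_one (R : Subalgebra ℂ 𝒪) :
    SGamma R = DeltaM R (Submodule.span R {1}) := by
  ext n
  simp [mem_SGamma_iff_exists_order_eq, mem_DeltaM_iff_exists_order_eq,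
    Submodule.mem_span_singleton, Subalgebra.smul_def]

theorem isGammaModule_SGamma (R : Subalgebra ℂ 𝒪) : IsGammaModule (SGamma R) (SGamma R) := by
  simpa only [← SGamma_eq_DeltaM_span_one] using isGammaModule_DeltaM R (Submodule.span R {1})

theorem notMem_DeltaM_span {S : Set 𝒪} {w : 𝒪} (hw : constantCoeff w ≠ 0)
    (h : ∀ s ∈ S, ∀ r ∈ R, coeff n (w * s * r) = 0) : n ∉ DeltaM R (Submodule.span R S) := by
  rw [mem_DeltaM_iff_exists_order_eq]
  rintro ⟨f, hf, hfn⟩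
  have hvanish : ∀ r ∈ R, coeff n (w * f * r) = 0 := by
    clear hfn
    induction hf using Submodule.span_induction with
    | mem s hs => exact h s hs
    | zero => simp
    | add f g _ _ hf hg =>
      intro r hr
      rw [mul_add, add_mul, map_add, hf r hr, hg r hr, add_zero]
    | smul q f _ hf =>
      intro r hr
      rw [Subalgebra.smul_def, smul_eq_mul, show w * (q * f) * r = w * f * (q * r) by ring]
      exact hf _ (mul_mem q.2 hr)
  have hw' : w.order = 0 := not_ne_iff.mp (order_ne_zero_iff_constCoeff_eq_zero.not.mpr hw)
  have hwf : (w * f).order = n := by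
    rw [order_mul, hw', hfn, zero_add]
  exact (order_eq_nat.mp hwf).1 (by simpa using hvanish 1 (one_mem R))

end Orders

section LeadingTerms

variable {n : ℕ} {c d : ℂ} {f g : 𝒪}

/-- `f = zⁿ + c zⁿ⁺¹ + O(zⁿ⁺²)`: the series `f` has order `n`, is normalized to have leading
coefficient `1`, and its next coefficient is `c`. -/
def HasLeadingTerms (n : ℕ) (c : ℂ) (f : 𝒪) : Prop :=
  X ^ (n + 2) ∣ f - (X ^ n + C c * X ^ (n + 1))

theorem hasLeadingTerms_iff_coeff :
    HasLeadingTerms n c f ↔ (∀ m < n, coeff m f = 0) ∧ coeff n f = 1 ∧ coeff (n + 1) f = c := by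
  simp only [HasLeadingTerms, X_pow_dvd_iff, map_sub, map_add, coeff_C_mul, coeff_X_pow,
    sub_eq_zero]
  constructor
  · intro h
    refine ⟨fun m hm ↦ ?_, ?_, ?_⟩
    · simpa [hm.ne, (Nat.lt_succ_of_lt hm).ne] using h m (by lia)
    · simpa using h n (by lia)
    · simpa using h (n + 1) (by lia)
  · rintro ⟨hlt, hn, hsucc⟩ m hm
    obtain hm | rfl | rfl : m < n ∨ m = n ∨ m = n + 1 := by lia
    · simpa [hm.ne, (Nat.lt_succ_of_lt hm).ne] using hlt m hm
    · simpa using hn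
    · simpa using hsucc

theorem HasLeadingTerms.order_eq (hf : HasLeadingTerms n c f) : f.order = n := by
  obtain ⟨hlt, hn, -⟩ := hasLeadingTerms_iff_coeff.mp hf
  exact order_eq_nat.mpr ⟨by simp [hn], hlt⟩

theorem HasLeadingTerms.mul {m : ℕ} (hf : HasLeadingTerms n c f) (hg : HasLeadingTerms m d g) :
    HasLeadingTerms (n + m) (c + d) (f * g) := by
  obtain ⟨p, hp⟩ := hf
  obtain ⟨q, hq⟩ := hg
  rw [sub_eq_iff_eq_add] at hp hq
  refine ⟨C c * C d + p * (1 + C d * X) + q * (1 + C c * X) + X ^ 2 * p * q, ?_⟩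
  rw [hp, hq, map_add]
  ring

/-- The pairs `(n, c)` such that `M` contains a series of the form `zⁿ + c zⁿ⁺¹ + O(zⁿ⁺²)`. -/
def leadingTerms (R : Subalgebra ℂ 𝒪) (M : Submodule R 𝒪) : Set (ℕ × ℂ) :=
  {p | ∃ f ∈ M, HasLeadingTerms p.1 p.2 f}

variable {R : Subalgebra ℂ 𝒪} {M : Submodule R 𝒪}

theorem mem_DeltaM_of_mem_leadingTerms (h : (n, c) ∈ leadingTerms R M) : n ∈ DeltaM R M := by
  obtain ⟨f, hf, hfc⟩ := h
  exact mem_DeltaM_iff_exists_order_eq.mpr ⟨f, hf, hfc.order_eq⟩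

theorem exists_mem_leadingTerms_of_mem_DeltaM (h : n ∈ DeltaM R M) :
    ∃ c, (n, c) ∈ leadingTerms R M := by
  obtain ⟨f, hf, hfn⟩ := mem_DeltaM_iff_exists_order_eq.mp h
  obtain ⟨hne, hlt⟩ := order_eq_nat.mp hfn
  refine ⟨coeff (n + 1) ((coeff n f)⁻¹ • f), (coeff n f)⁻¹ • f, M.smul_of_tower_mem _ hf,
    hasLeadingTerms_iff_coeff.mpr ⟨fun m hm ↦ ?_, ?_, rfl⟩⟩
  · rw [map_smul, hlt m hm, smul_zero]
  · rw [map_smul, smul_eq_mul, inv_mul_cancel₀ hne]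

theorem HasLeadingTerms.add_mem_leadingTerms {m : ℕ} {r : 𝒪} (hrd : HasLeadingTerms m d r)
    (hr : r ∈ R) (h : (n, c) ∈ leadingTerms R M) : (m + n, d + c) ∈ leadingTerms R M := by
  obtain ⟨f, hf, hfc⟩ := h
  exact ⟨r * f, M.smul_mem ⟨r, hr⟩ hf, hrd.mul hfc⟩

theorem succ_mem_DeltaM_of_mem_leadingTerms (hc : (n, c) ∈ leadingTerms R M)
    (hd : (n, d) ∈ leadingTerms R M) (hcd : c ≠ d) : n + 1 ∈ DeltaM R M := by
  obtain ⟨f, hf, hfc⟩ := hc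
  obtain ⟨g, hg, hgd⟩ := hd
  obtain ⟨hf_lt, hf_n, hf_succ⟩ := hasLeadingTerms_iff_coeff.mp hfc
  obtain ⟨hg_lt, hg_n, hg_succ⟩ := hasLeadingTerms_iff_coeff.mp hgd
  refine mem_DeltaM_iff_exists_order_eq.mpr ⟨f - g, sub_mem hf hg, order_eq_nat.mpr ⟨?_, ?_⟩⟩
  · rw [map_sub, hf_succ, hg_succ]
    exact sub_ne_zero.mpr hcd
  · intro m hm
    obtain hm | rfl := Nat.lt_succ_iff_lt_or_eq.mp hm
    · rw [map_sub, hf_lt m hm, hg_lt m hm, sub_zero]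
    · rw [map_sub, hf_n, hg_n, sub_self]

end LeadingTerms

section ShiftedBinomial

/-- The series `z^m (1 + z)^e` for `p = (m, e)`. Multiplication by `z^a` and by `z^b + z^(b+1)`
adds `(a, 0)` and `(b, 1)` to `p`. -/
def shiftedBinomial (p : ℕ × ℕ) : 𝒪 := X ^ p.1 * (1 + X) ^ p.2

theorem shiftedBinomial_add (p q : ℕ × ℕ) :
    shiftedBinomial (p + q) = shiftedBinomial p * shiftedBinomial q := by
  simp only [shiftedBinomial, Prod.fst_add, Prod.snd_add, pow_add]
  ring

theorem pow_mul_pow_eq_shiftedBinomial (a b i j : ℕ) :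
    ((X ^ a) ^ i * (X ^ b + X ^ (b + 1)) ^ j : 𝒪) = shiftedBinomial (a * i + b * j, j) := by
  rw [shiftedBinomial, pow_succ, ← mul_one_add, mul_pow, ← pow_mul, ← pow_mul, pow_add, mul_assoc]

theorem coeff_shiftedBinomial (n : ℕ) (p : ℕ × ℕ) :
    coeff n (shiftedBinomial p) = if p.1 ≤ n then (p.2.choose (n - p.1) : ℂ) else 0 := by
  have hpoly : ((1 + X) ^ p.2 : 𝒪) = ((1 + Polynomial.X) ^ p.2 : Polynomial ℂ) := by simp
  rw [shiftedBinomial, coeff_X_pow_mul', hpoly, Polynomial.coeff_coe,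
    Polynomial.coeff_one_add_X_pow]

theorem hasLeadingTerms_shiftedBinomial (p : ℕ × ℕ) :
    HasLeadingTerms p.1 p.2 (shiftedBinomial p) := by
  simp +contextual [hasLeadingTerms_iff_coeff, coeff_shiftedBinomial]

theorem shiftedBinomial_mem_Rring (a b N i j : ℕ) :
    shiftedBinomial (a * i + b * j, j) ∈ Rring a b (b + 1) N := by
  rw [← pow_mul_pow_eq_shiftedBinomial]
  refine ⟨_, mul_mem (pow_mem ?_ i) (pow_mem ?_ j), 0, by rw [mul_zero, add_zero]⟩ <;>
    exact Algebra.subset_adjoin (by simp)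

theorem add_mem_leadingTerms {a b N n : ℕ} {c : ℂ} {M : Submodule (Rring a b (b + 1) N) 𝒪}
    (h : (n, c) ∈ leadingTerms _ M) (i j : ℕ) :
    (a * i + b * j + n, j + c) ∈ leadingTerms _ M :=
  (hasLeadingTerms_shiftedBinomial (a * i + b * j, j)).add_mem_leadingTerms
    (shiftedBinomial_mem_Rring a b N i j) h

/-- The `R`-module generated by the series `z^m (1 + z)^e` with `(m, e) ∈ S`. -/
def shiftedBinomialModule (R : Subalgebra ℂ 𝒪) (S : Finset (ℕ × ℕ)) : Submodule R 𝒪 :=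
  Submodule.span R (shiftedBinomial '' S)

variable {R : Subalgebra ℂ 𝒪} {S : Finset (ℕ × ℕ)} {a b N n : ℕ}

theorem mem_leadingTerms_shiftedBinomialModule {m e : ℕ} (h : (m, e) ∈ S) :
    (m, (e : ℂ)) ∈ leadingTerms R (shiftedBinomialModule R S) :=
  ⟨_, Submodule.subset_span ⟨_, h, rfl⟩, hasLeadingTerms_shiftedBinomial (m, e)⟩

theorem isStd_shiftedBinomialModule {e : ℕ} (h : (0, e) ∈ S) :
    IsStd R (shiftedBinomialModule R S) :=
  ⟨Submodule.fg_span (S.finite_toSet.image _),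
    mem_DeltaM_of_mem_leadingTerms (mem_leadingTerms_shiftedBinomialModule h)⟩

theorem SGamma_eq_DeltaM_shiftedBinomialModule (R : Subalgebra ℂ 𝒪) :
    SGamma R = DeltaM R (shiftedBinomialModule R {(0, 0)}) := by
  rw [SGamma_eq_DeltaM_span_one]
  simp [shiftedBinomialModule, shiftedBinomial]

theorem coeff_mul_eq_zero_of_mem_Rring {c : ℕ} {v r : 𝒪} (hn : n < N)
    (hv : ∀ i j, coeff n (v * ((X ^ a) ^ i * (X ^ b + X ^ c) ^ j)) = 0)
    (hr : r ∈ Rring a b c N) : coeff n (v * r) = 0 := by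
  obtain ⟨p, hp, g, rfl⟩ := hr
  have hvp : coeff n (v * p) = 0 := by
    rw [← Subalgebra.mem_toSubmodule, Algebra.adjoin_eq_span] at hp
    induction hp using Submodule.span_induction with
    | mem p hp =>
      obtain ⟨i, j, rfl⟩ := (Submonoid.mem_closure_pair _ _ _).mp hp
      exact hv i j
    | zero => simp
    | add p q _ _ hp hq => rw [mul_add, map_add, hp, hq, add_zero]
    | smul t p _ hp => rw [mul_smul_comm, map_smul, hp, smul_zero]
  rw [mul_add, map_add, hvp, mul_left_comm, coeff_X_pow_mul', if_neg hn.not_ge, add_zero]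

/-- The coefficient of `z^n` in `(∑ k, w_k z^k) z^m (1 + z)^e` for `q = (m, e)`, written as an
integer so that its vanishing is decidable. -/
def weightedCoeff {d : ℕ} (w : Fin d → ℤ) (n : ℕ) (q : ℕ × ℕ) : ℤ :=
  ∑ k, w k * if q.1 + k ≤ n then (q.2.choose (n - (q.1 + k)) : ℤ) else 0

theorem coeff_sum_mul_shiftedBinomial {d : ℕ} (w : Fin d → ℤ) (n : ℕ) (q : ℕ × ℕ) :
    coeff n ((∑ k, C (w k : ℂ) * X ^ (k : ℕ)) * shiftedBinomial q : 𝒪) =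
      (weightedCoeff w n q : ℂ) := by
  have hshift (k : ℕ) : X ^ k * shiftedBinomial q = shiftedBinomial (q + (k, 0)) := by
    rw [shiftedBinomial_add, mul_comm]
    simp [shiftedBinomial]
  simp only [Finset.sum_mul, map_sum, mul_assoc, coeff_C_mul, hshift, coeff_shiftedBinomial,
    weightedCoeff, Prod.fst_add, Prod.snd_add, add_zero]
  push_cast
  rfl

theorem notMem_DeltaM_shiftedBinomialModule {d : ℕ} (w : Fin (d + 1) → ℤ) (hw : w 0 ≠ 0)
    (ha : 0 < a) (hb : 0 < b) (hn : n < N)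
    (h : ∀ p ∈ S, ∀ i ≤ n / a, ∀ j ≤ n / b, weightedCoeff w n (p + (a * i + b * j, j)) = 0) :
    n ∉ DeltaM (Rring a b (b + 1) N) (shiftedBinomialModule _ S) := by
  have hw' : constantCoeff (∑ k, C (w k : ℂ) * X ^ (k : ℕ) : 𝒪) ≠ 0 := by
    simpa [Fin.sum_univ_succ] using hw
  refine notMem_DeltaM_span hw' ?_
  rintro _ ⟨p, hp, rfl⟩ r hr
  refine coeff_mul_eq_zero_of_mem_Rring hn (fun i j ↦ ?_) hr
  rw [pow_mul_pow_eq_shiftedBinomial, mul_assoc, ← shiftedBinomial_add,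
    coeff_sum_mul_shiftedBinomial, Int.cast_eq_zero]
  by_cases hij : a * i + b * j ≤ n
  · exact h p hp i ((Nat.le_div_iff_mul_le ha).mpr (by lia)) j
      ((Nat.le_div_iff_mul_le hb).mpr (by lia))
  · refine Finset.sum_eq_zero fun k _ ↦ ?_
    rw [if_neg (by simp only [Prod.fst_add]; lia), mul_zero]

end ShiftedBinomial

/-- The gaps of the numerical semigroup `⟨6, 8, 25⟩`. -/
def gapFinset : Finset ℕ := {1, 2, 3, 4, 5, 7, 9, 10, 11, 13, 15, 17, 19, 21, 23, 27, 29, 35}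

theorem exists_eq_of_notMem_gapFinset {n : ℕ} (hn : n ∉ gapFinset) :
    ∃ i j k, 6 * i + 8 * j + 25 * k = n := by
  -- `0, 25, 8, 33, 16, 41` are the least elements of the semigroup in the classes modulo `6`.
  obtain ⟨j, hj, k, hk, hjk⟩ : ∃ j < 3, ∃ k < 2, (8 * j + 25 * k) % 6 = n % 6 := by
    have hclasses : ∀ r < 6, ∃ j < 3, ∃ k < 2, (8 * j + 25 * k) % 6 = r := by decide
    exact hclasses (n % 6) (Nat.mod_lt _ (by norm_num))
  have hle : 8 * j + 25 * k ≤ n := by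
    simp only [gapFinset, Finset.mem_insert, Finset.mem_singleton] at hn
    interval_cases j <;> interval_cases k <;> omega
  exact ⟨(n - (8 * j + 25 * k)) / 6, j, k, by omega⟩

theorem mem_SGamma_of_notMem_gapFinset {n : ℕ} (hn : n ∉ gapFinset) :
    n ∈ SGamma (Rring 6 8 9 36) := by
  have hadd := isGammaModule_SGamma (Rring 6 8 9 36)
  have hmonomial (i j : ℕ) : 6 * i + 8 * j ∈ SGamma (Rring 6 8 9 36) :=
    mem_SGamma_iff_exists_order_eq.mpr
      ⟨_, shiftedBinomial_mem_Rring 6 8 36 i j, (hasLeadingTerms_shiftedBinomial _).order_eq⟩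
  have h25 : 25 ∈ SGamma (Rring 6 8 9 36) := by
    rw [SGamma_eq_DeltaM_shiftedBinomialModule]
    have h1 : (0, ((0 : ℕ) : ℂ)) ∈
        leadingTerms (Rring 6 8 9 36) (shiftedBinomialModule _ {(0, 0)}) :=
      mem_leadingTerms_shiftedBinomialModule (by simp)
    -- `y³ - x⁴ = 3 z²⁵ + ⋯`
    exact succ_mem_DeltaM_of_mem_leadingTerms (add_mem_leadingTerms h1 0 3)
      (add_mem_leadingTerms h1 4 0) (by norm_num)
  obtain ⟨i, j, k, rfl⟩ := exists_eq_of_notMem_gapFinset hn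
  clear hn
  induction k with
  | zero => exact hmonomial i j
  | succ k ih =>
    rw [mul_add_one, ← add_assoc, add_comm]
    exact hadd 25 h25 _ ih

theorem Gaps_eq_gapFinset : Gaps (Rring 6 8 9 36) = gapFinset := by
  have h35 : 35 ∉ SGamma (Rring 6 8 9 36) := by
    rw [SGamma_eq_DeltaM_shiftedBinomialModule]
    -- The weights, here and below, solve the linear system posed by the last hypothesis.
    apply notMem_DeltaM_shiftedBinomialModule ![9, -18, 24, -24, 16] <;> decide
  have hsymm : ∀ n ∈ gapFinset, n ≤ 35 ∧ 35 - n ∉ gapFinset := by decide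
  ext n
  constructor
  · exact fun hn ↦ not_not.mp fun hn' ↦ hn (mem_SGamma_of_notMem_gapFinset hn')
  · intro hn hnΓ
    obtain ⟨hle, hn'⟩ := hsymm n hn
    apply h35
    rw [← Nat.sub_add_cancel hle]
    exact isGammaModule_SGamma _ _ (mem_SGamma_of_notMem_gapFinset hn') n hnΓ

theorem Dset_eq_of_forall_exists {M : Submodule (Rring 6 8 9 36) 𝒪} {D A B : Finset ℕ}
    (hD : D ⊆ gapFinset) (hA : ∀ a ∈ A, a ∈ DeltaM _ M) (hB : ∀ b ∈ B, b ∉ DeltaM _ M)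
    (hDA : ∀ n ∈ D, ∃ a ∈ A, a ≤ n ∧ n - a ∉ gapFinset)
    (hDB : ∀ n ∈ gapFinset \ D, ∃ b ∈ B, n ≤ b ∧ b - n ∉ gapFinset) :
    Dset (Rring 6 8 9 36) M = D := by
  have hadd := isGammaModule_DeltaM _ M
  rw [Dset, Gaps_eq_gapFinset]
  ext n
  constructor
  · rintro ⟨hnΔ, hn⟩
    by_contra hnD
    obtain ⟨b, hb, hnb, hbn⟩ := hDB n (Finset.mem_sdiff.mpr ⟨hn, hnD⟩)
    apply hB b hb
    rw [← Nat.sub_add_cancel hnb]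
    exact hadd _ (mem_SGamma_of_notMem_gapFinset hbn) n hnΔ
  · intro hn
    obtain ⟨a, ha, han, hna⟩ := hDA n hn
    refine ⟨?_, hD hn⟩
    rw [← Nat.sub_add_cancel han]
    exact hadd _ (mem_SGamma_of_notMem_gapFinset hna) a (hA a ha)

theorem Dset_shiftedBinomialModule_eq_union_two :
    Dset (Rring 6 8 9 36) (shiftedBinomialModule _ {(0, 0), (2, 1), (17, 0)}) =
      ({10, 17, 19, 23, 27, 29, 35} ∪ {2} : Finset ℕ) := by
  set M := shiftedBinomialModule (Rring 6 8 9 36) {(0, 0), (2, 1), (17, 0)}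
  have h0 : (0, ((0 : ℕ) : ℂ)) ∈ leadingTerms _ M :=
    mem_leadingTerms_shiftedBinomialModule (by decide)
  have h2 : (2, ((1 : ℕ) : ℂ)) ∈ leadingTerms _ M :=
    mem_leadingTerms_shiftedBinomialModule (by decide)
  have h17 : (17, ((0 : ℕ) : ℂ)) ∈ leadingTerms _ M :=
    mem_leadingTerms_shiftedBinomialModule (by decide)
  -- `y² (z² + z³) - x³ = 3 z¹⁹ + ⋯`
  have h19 : 19 ∈ DeltaM _ M :=
    succ_mem_DeltaM_of_mem_leadingTerms (add_mem_leadingTerms h2 0 2)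
      (add_mem_leadingTerms h0 3 0) (by norm_num)
  have h21 : 21 ∉ DeltaM _ M := by
    apply notMem_DeltaM_shiftedBinomialModule ![3, -3, 2] <;> decide
  have h11 : 11 ∉ DeltaM _ M := by
    apply notMem_DeltaM_shiftedBinomialModule ![1, -2] <;> decide
  have h4 : 4 ∉ DeltaM _ M := by
    apply notMem_DeltaM_shiftedBinomialModule ![1] <;> decide
  refine Dset_eq_of_forall_exists (A := {0, 2, 17, 19}) (B := {21, 11, 4}) (by decide) ?_ ?_
    (by decide) (by decide)
  · simp only [Finset.forall_mem_insert, Finset.mem_singleton, forall_eq]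
    exact ⟨mem_DeltaM_of_mem_leadingTerms h0, mem_DeltaM_of_mem_leadingTerms h2,
      mem_DeltaM_of_mem_leadingTerms h17, h19⟩
  · simp only [Finset.forall_mem_insert, Finset.mem_singleton, forall_eq]
    exact ⟨h21, h11, h4⟩

theorem Dset_shiftedBinomialModule_eq_union_four :
    Dset (Rring 6 8 9 36) (shiftedBinomialModule _ {(0, 1), (4, 0), (19, 0)}) =
      ({10, 17, 19, 23, 27, 29, 35} ∪ {4} : Finset ℕ) := by
  set M := shiftedBinomialModule (Rring 6 8 9 36) {(0, 1), (4, 0), (19, 0)}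
  have h0 : (0, ((1 : ℕ) : ℂ)) ∈ leadingTerms _ M :=
    mem_leadingTerms_shiftedBinomialModule (by decide)
  have h4 : (4, ((0 : ℕ) : ℂ)) ∈ leadingTerms _ M :=
    mem_leadingTerms_shiftedBinomialModule (by decide)
  have h19 : (19, ((0 : ℕ) : ℂ)) ∈ leadingTerms _ M :=
    mem_leadingTerms_shiftedBinomialModule (by decide)
  -- `y² (1 + z) - x² z⁴ = 3 z¹⁷ + ⋯`
  have h17 : 17 ∈ DeltaM _ M :=
    succ_mem_DeltaM_of_mem_leadingTerms (add_mem_leadingTerms h0 0 2)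
      (add_mem_leadingTerms h4 2 0) (by norm_num)
  have h21 : 21 ∉ DeltaM _ M := by
    apply notMem_DeltaM_shiftedBinomialModule ![1, -2] <;> decide
  have h11 : 11 ∉ DeltaM _ M := by
    apply notMem_DeltaM_shiftedBinomialModule ![1] <;> decide
  have h2 : 2 ∉ DeltaM _ M := by
    apply notMem_DeltaM_shiftedBinomialModule ![1] <;> decide
  refine Dset_eq_of_forall_exists (A := {0, 4, 17, 19}) (B := {21, 11, 2}) (by decide) ?_ ?_
    (by decide) (by decide)
  · simp only [Finset.forall_mem_insert, Finset.mem_singleton, forall_eq]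
    exact ⟨mem_DeltaM_of_mem_leadingTerms h0, mem_DeltaM_of_mem_leadingTerms h4, h17,
      mem_DeltaM_of_mem_leadingTerms h19⟩
  · simp only [Finset.forall_mem_insert, Finset.mem_singleton, forall_eq]
    exact ⟨h21, h11, h2⟩

theorem succ_mem_DeltaM_of_zero_of_self_of_two_mul {k N : ℕ}
    {M : Submodule (Rring (3 * k) (4 * k) (4 * k + 1) N) 𝒪} (h0 : 0 ∈ DeltaM _ M)
    (h1 : k ∈ DeltaM _ M) (h2 : 2 * k ∈ DeltaM _ M) :
    4 * k + 1 ∈ DeltaM _ M ∨ 5 * k + 1 ∈ DeltaM _ M ∨ 6 * k + 1 ∈ DeltaM _ M := by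
  by_contra! hnot
  obtain ⟨h4, h5, h6⟩ := hnot
  obtain ⟨a, ha⟩ := exists_mem_leadingTerms_of_mem_DeltaM h0
  obtain ⟨b, hb⟩ := exists_mem_leadingTerms_of_mem_DeltaM h1
  obtain ⟨c, hc⟩ := exists_mem_leadingTerms_of_mem_DeltaM h2
  have hcoeff_eq {n l m : ℕ} {s t : ℂ} (hn : n + 1 ∉ DeltaM _ M)
      (hs : (l, s) ∈ leadingTerms _ M) (ht : (m, t) ∈ leadingTerms _ M) (hl : l = n)
      (hm : m = n) : s = t := by
    subst hl hm
    exact not_ne_iff.mp fun hst ↦ hn (succ_mem_DeltaM_of_mem_leadingTerms hs ht hst)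
  have hab : b = 1 + a := by
    simpa using
      hcoeff_eq h4 (add_mem_leadingTerms hb 1 0) (add_mem_leadingTerms ha 0 1) (by ring) (by ring)
  have hbc : c = 1 + b := by
    simpa using
      hcoeff_eq h5 (add_mem_leadingTerms hc 1 0) (add_mem_leadingTerms hb 0 1) (by ring) (by ring)
  have hca : 1 + c = a := by
    simpa using
      hcoeff_eq h6 (add_mem_leadingTerms hc 0 1) (add_mem_leadingTerms ha 2 0) (by ring) (by ring)
  exact three_ne_zero (α := ℂ) (by linear_combination hca - hbc - hab)

/-- For `ℛ = ℂ[z^6, z^8+z^9] + z^{36}ℂ⟦z⟧` (value semigroup `⟨6,8,25⟩`) and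
`D = {10,17,19,23,27,29,35}`: there are standard modules with `D`-set `D ∪ {2}`
and with `D`-set `D ∪ {4}`, but none with `D`-set `D ∪ {2,4}`. -/
theorem statement19 :
    (∃ M : Submodule ↥(Rring 6 8 9 36) 𝒪, IsStd (Rring 6 8 9 36) M ∧
      Dset (Rring 6 8 9 36) M
        = ({10, 17, 19, 23, 27, 29, 35} : Set ℕ) ∪ {2}) ∧
    (∃ M : Submodule ↥(Rring 6 8 9 36) 𝒪, IsStd (Rring 6 8 9 36) M ∧
      Dset (Rring 6 8 9 36) M
        = ({10, 17, 19, 23, 27, 29, 35} : Set ℕ) ∪ {4}) ∧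
    ¬ (∃ M : Submodule ↥(Rring 6 8 9 36) 𝒪, IsStd (Rring 6 8 9 36) M ∧
      Dset (Rring 6 8 9 36) M
        = ({10, 17, 19, 23, 27, 29, 35} : Set ℕ) ∪ {2, 4}) := by
  refine ⟨⟨shiftedBinomialModule _ {(0, 0), (2, 1), (17, 0)},
      isStd_shiftedBinomialModule (e := 0) (by decide), ?_⟩,
    ⟨shiftedBinomialModule _ {(0, 1), (4, 0), (19, 0)},
      isStd_shiftedBinomialModule (e := 1) (by decide), ?_⟩, ?_⟩
  · simpa only [Finset.coe_union, Finset.coe_insert, Finset.coe_singleton] using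
      Dset_shiftedBinomialModule_eq_union_two
  · simpa only [Finset.coe_union, Finset.coe_insert, Finset.coe_singleton] using
      Dset_shiftedBinomialModule_eq_union_four
  · rintro ⟨M, ⟨-, h0⟩, hD⟩
    have hΔ {n : ℕ} (hn : n ∈ gapFinset) :
        n ∈ DeltaM _ M ↔ n ∈ ({10, 17, 19, 23, 27, 29, 35} ∪ {2, 4} : Set ℕ) := by
      rw [← hD, Dset, Gaps_eq_gapFinset]
      exact (and_iff_left hn).symm
    have h2 : 2 ∈ DeltaM _ M := (hΔ (by decide)).mpr (by simp)
    have h4 : 4 ∈ DeltaM _ M := (hΔ (by decide)).mpr (by simp)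
    obtain h | h | h := succ_mem_DeltaM_of_zero_of_self_of_two_mul (k := 2) h0 h2 h4 <;>
      simpa using (hΔ (by decide)).mp h

end
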